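/- A finite bipartite graph G = (S ∪ Q, E) has an ordering of the questions satisfying the interval property if and only if it has an ordering of the students satisfying the nested property. -/

import Mathlib

open Finset

/-- The neighborhood of a student `s` in the bipartite graph with edge set `E`. -/
def nbhd {S Q : Type*} [Fintype Q] [DecidableEq S] [DecidableEq Q]
    (E : Finset (S × Q)) (s : S) : Finset Q :=
  Finset.univ.filter fun q => (s, q) ∈ E

/-- The `j` easiest questions under the ordering `β` (`j ∈ {0, …, |Q|}`). -/
def prefixSet {Q : Type*} [Fintype Q] [DecidableEq Q]
    (β : Q ≃ Fin (Fintype.card Q)) (j : ℕ) : Finset Q :=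
  Finset.univ.filter fun q => (β q : ℕ) < j

theorem exists_order {X : Type*} [Fintype X] (f : X → ℕ) :
    ∃ e : X ≃ Fin (Fintype.card X), ∀ x y, e x ≤ e y → f x ≤ f y := by
  let e0 := Fintype.equivFin X
  refine ⟨e0.trans (Tuple.sort (f ∘ e0.symm)).symm, fun x y h => ?_⟩
  have := Tuple.monotone_sort (f ∘ e0.symm) h
  simpa using this

theorem lower_isInitial {Q : Type*} [Fintype Q] [DecidableEq Q]
    (β : Q ≃ Fin (Fintype.card Q)) (T : Finset Q)
    (hT : ∀ q q', q ∈ T → β q' ≤ β q → q' ∈ T) :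
    ∃ j ≤ Fintype.card Q, T = prefixSet β j := by
  classical
  have hex : ∃ j : ℕ, j = Fintype.card Q ∨ ∃ q, q ∉ T ∧ (β q : ℕ) = j := ⟨_, Or.inl rfl⟩
  refine ⟨Nat.find hex, Nat.find_min' hex (Or.inl rfl), ?_⟩
  ext q
  simp only [prefixSet, Finset.mem_filter, Finset.mem_univ, true_and]
  constructor
  · intro hq
    by_contra hlt
    have hle := not_lt.mp hlt
    rcases Nat.find_spec hex with h | ⟨q0, h0, h1⟩
    · have := (β q).isLt
      omega
    · exact h0 (hT q q0 hq (Fin.le_def.mpr (by omega)))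
  · intro hq
    by_contra hn
    exact Nat.find_min hex hq (Or.inr ⟨q, hn, rfl⟩)

/-- A finite bipartite graph has an ordering of the questions satisfying the interval
property iff it has an ordering of the students satisfying the nested property. -/
theorem stmt2 {S Q : Type*} [Fintype S] [Fintype Q] [DecidableEq S] [DecidableEq Q]
    (E : Finset (S × Q)) :
    (∃ β : Q ≃ Fin (Fintype.card Q),
        ∀ s : S, ∃ j ≤ Fintype.card Q, nbhd E s = prefixSet β j) ↔
    (∃ α : S ≃ Fin (Fintype.card S),
        ∀ s₁ s₂ : S, α s₂ ≤ α s₁ → nbhd E s₂ ⊆ nbhd E s₁) := by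
  constructor
  · rintro ⟨β, hβ⟩
    obtain ⟨α, hα⟩ := exists_order (fun s => (nbhd E s).card)
    refine ⟨α, fun s₁ s₂ h => ?_⟩
    have hc := hα _ _ h
    have mono : ∀ i j, i ≤ j → prefixSet β i ⊆ prefixSet β j := by
      intro i j hij q hq
      simp only [prefixSet, Finset.mem_filter, Finset.mem_univ, true_and] at hq ⊢
      omega
    obtain ⟨i, -, hi⟩ := hβ s₁
    obtain ⟨j, -, hj⟩ := hβ s₂
    rcases le_total j i with hij | hij
    · rw [hi, hj]; exact mono _ _ hij
    · have hs : nbhd E s₁ ⊆ nbhd E s₂ := by rw [hi, hj]; exact mono _ _ hij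
      exact (Finset.eq_of_subset_of_card_le hs hc).symm.subset
  · rintro ⟨α, hα⟩
    obtain ⟨β, hβ⟩ := exists_order
      (fun q : Q => (Finset.univ.filter fun s : S => q ∉ nbhd E s).card)
    refine ⟨β, fun s => lower_isInitial β _ fun q q' hq hle => ?_⟩
    by_contra hq'
    have h1 := hβ _ _ hle
    refine absurd h1 (not_le.mpr (Finset.card_lt_card ?_))
    rw [Finset.ssubset_iff_of_subset]
    · exact ⟨s, by simpa using hq', by simpa using hq⟩
    · intro t ht
      simp only [Finset.mem_filter, Finset.mem_univ, true_and] at ht ⊢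
      rcases le_total (α t) (α s) with h | h
      · exact fun hh => hq' (hα _ _ h hh)
      · exact absurd (hα _ _ h hq) ht
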